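/- Let R be a unital ring and G_1,...,G_d finite groups with each |G_i| invertible in R. Then there is a ring isomorphism J_{G_1,...,G_d}(R) ≅ M_d(R) × Π_{i=1}^d Δ_R(G_i), where Δ_R(G_i) is the augmentation ideal of R[G_i] viewed as a (non-unital summand) ring, namely R[G_i](1 − e_{G_i}). Consequently, if R is semisimple then J_{G_1,...,G_d}(R) is semisimple. -/

import Mathlib

open MonoidAlgebra

/-- A block matrix is a join of `G i`-circulant matrices if each diagonal block
is `G i`-circulant and each off-diagonal block is constant. -/
def IsJoin {d : ℕ} {G : Fin d → Type*} [∀ i, Group (G i)] {R : Type*}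
    (A : Matrix ((i : Fin d) × G i) ((i : Fin d) × G i) R) : Prop :=
  (∀ (i : Fin d) (g x y : G i), A ⟨i, g * x⟩ ⟨i, g * y⟩ = A ⟨i, x⟩ ⟨i, y⟩) ∧
  (∀ (i j : Fin d), i ≠ j → ∀ (x x' : G i) (y y' : G j),
    A ⟨i, x⟩ ⟨j, y⟩ = A ⟨i, x'⟩ ⟨j, y'⟩)

/-- The augmentation homomorphism `R[G] → R`, sending `Σ a_g g` to `Σ a_g`. -/
noncomputable def aug (R : Type*) [Ring R] (G : Type*) [Group G] :
    MonoidAlgebra R G →+* R :=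
  liftNCRingHom (RingHom.id R) (1 : G →* R) (fun _ _ => by simp [Commute.one_right])

lemma aug_single {R : Type*} [Ring R] {G : Type*} [Group G] (g : G) (c : R) :
    aug R G (MonoidAlgebra.single g c) = c := by
  simp [aug, liftNCRingHom, MonoidAlgebra.liftNC_single]

/-- `M_d(R) × Π_i Δ_R(G_i)`, realized as a non-unital subring of
`M_d(R) × Π_i R[G_i]`: the set of pairs whose second components all lie in the
augmentation ideal. Its multiplicative identity is `(1, (1 - e_{G_i})_i)`. -/
noncomputable def targetΔ {d : ℕ} (G : Fin d → Type*) [∀ i, Group (G i)]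
    (R : Type*) [Ring R] :
    NonUnitalSubring (Matrix (Fin d) (Fin d) R × ((i : Fin d) → MonoidAlgebra R (G i))) where
  carrier := {p | ∀ i, aug R (G i) (p.2 i) = 0}
  add_mem' := by intro a b ha hb i; simp [map_add, ha i, hb i]
  zero_mem' := by intro i; simp
  neg_mem' := by intro a ha i; simp [ha i]
  mul_mem' := by intro a b ha hb i; simp [map_mul, ha i]

/-- The idempotent `e_G = (1/|G|) Σ_{g ∈ G} g`. -/
noncomputable def eGrp (R : Type*) [Ring R] (G : Type*) [Group G] [Fintype G]
    [Invertible (Fintype.card G : R)] : MonoidAlgebra R G :=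
  ∑ g : G, MonoidAlgebra.single g (⅟(Fintype.card G : R))

lemma one_sub_eGrp_mem {d : ℕ} (G : Fin d → Type*) [∀ i, Group (G i)]
    [∀ i, Fintype (G i)] (R : Type*) [Ring R]
    [∀ i, Invertible (Fintype.card (G i) : R)] :
    (⟨1, fun i => (1 : MonoidAlgebra R (G i)) - eGrp R (G i)⟩ :
      Matrix (Fin d) (Fin d) R × ((i : Fin d) → MonoidAlgebra R (G i)))
      ∈ targetΔ G R := by
  intro i
  have h1 : aug R (G i) (eGrp R (G i)) = 1 := by
    simp only [eGrp, map_sum, aug_single, Finset.sum_const, Finset.card_univ,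
      nsmul_eq_mul]
    exact mul_invOf_self _
  simp [map_sub, h1]

/-!
Let `V` average each block and let `U` be the indicator matrix of the blocks, so that `V * U = 1`,
and let `D` send a family of group algebra elements to the block diagonal matrix of its circulants.
Then `U * V = D e` for the family `e = (e_{G_i})` of central idempotents, and a matrix is a join
exactly when it has the form `U * C * V + D p`. Hence `(C, p) ↦ U * C * V + D (p * (1 - e))` is a
ring homomorphism from `M_d(R) × ∏ R[G_i]` onto the join ring, and it is bijective on the summand
`M_d(R) × ∏ Δ_R(G_i)`. For semisimple `R` its domain is semisimple, by the theorem of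
Maschke.
-/

section SingleSMul

variable {R : Type*} [Semiring R] {M : Type*} [Monoid M]
  {V : Type*} [AddCommMonoid V] [Module R V] [Module R[M] V] [IsScalarTower R R[M] V]

lemma single_smul_eq_smul_single_one_smul (m : M) (r : R) (v : V) :
    (single m r : R[M]) • v = r • (single m (1 : R) : R[M]) • v := by
  rw [← smul_assoc, smul_single, smul_eq_mul, mul_one]

lemma single_smul_smul (m : M) (r s : R) (v : V) :
    (single m r : R[M]) • s • v = (single m (r * s) : R[M]) • v := by
  rw [← one_smul R[M] v, ← smul_assoc s, smul_smul, one_def, smul_single, single_mul_single,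
    mul_one, smul_eq_mul, mul_one, ← one_def, one_smul]

end SingleSMul

lemma commute_invOf_natCast {R : Type*} [Semiring R] (n : ℕ) [Invertible (n : R)] (r : R) :
    Commute (⅟(n : R)) r :=
  (Nat.cast_commute n r).invOf_left

section Maschke

variable {R : Type*} [Ring R] {G : Type*} [Group G] [Fintype G] [Invertible (Fintype.card G : R)]
  {V : Type*} [AddCommGroup V] [Module R V] [Module R[G] V] [IsScalarTower R R[G] V]
  {W : Type*} [AddCommGroup W] [Module R W] [Module R[G] W] [IsScalarTower R R[G] W]

lemma sum_conj_single_smul (π : V →ₗ[R] W) (h : G) (r : R) (v : V) :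
    ∑ g : G, (single g⁻¹ (⅟(Fintype.card G : R)) : R[G]) •
        π ((single g (1 : R) : R[G]) • (single h r : R[G]) • v) =
      (single h r : R[G]) • ∑ g : G, (single g⁻¹ (⅟(Fintype.card G : R)) : R[G]) •
        π ((single g (1 : R) : R[G]) • v) := by
  rw [Finset.smul_sum]
  refine Fintype.sum_bijective (· * h) (Group.mulRight_bijective h) _ _ fun g => ?_
  rw [smul_smul (single g (1 : R)), single_mul_single, one_mul,
    single_smul_eq_smul_single_one_smul (g * h) r v, map_smul, single_smul_smul, smul_smul,
    single_mul_single, mul_inv_rev, mul_inv_cancel_left, (commute_invOf_natCast _ r).eq]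

variable (G) in
/-- The average `|G|⁻¹ ∑ g, g⁻¹ π g` of the conjugates of an `R`-linear map. In contrast
to `LinearMap.equivariantProjection`, the ring `R` need not be commutative. -/
noncomputable def averageConj (π : V →ₗ[R] W) : V →ₗ[R[G]] W where
  toFun v := ∑ g : G, (single g⁻¹ (⅟(Fintype.card G : R)) : R[G]) •
    π ((single g (1 : R) : R[G]) • v)
  map_add' u v := by simp only [smul_add, map_add, Finset.sum_add_distrib]
  map_smul' x v := by
    induction x using MonoidAlgebra.induction_linear with
    | zero => simp only [zero_smul, smul_zero, map_zero, Finset.sum_const_zero]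
    | add x y hx hy =>
      simp only [add_smul, smul_add, map_add, Finset.sum_add_distrib, RingHom.id_apply] at hx hy ⊢
      rw [hx, hy]
    | single h r => exact sum_conj_single_smul π h r v

lemma leftInverse_averageConj {π : V →ₗ[R] W} {i : W →ₗ[R[G]] V} (hπ : Function.LeftInverse π i) :
    Function.LeftInverse (averageConj G π) i := fun w => by
  have hconj (g : G) : (single g⁻¹ (⅟(Fintype.card G : R)) : R[G]) •
      π ((single g (1 : R) : R[G]) • i w) = ⅟(Fintype.card G : R) • w := by
    rw [← map_smul i, hπ, smul_smul, single_mul_single, inv_mul_cancel, mul_one,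
      single_smul_eq_smul_single_one_smul, ← one_def, one_smul]
  change ∑ g : G, (single g⁻¹ (⅟(Fintype.card G : R)) : R[G]) • π _ = w
  simp only [hconj, Finset.sum_const, Finset.card_univ]
  rw [← Nat.cast_smul_eq_nsmul R, smul_smul, mul_invOf_self, one_smul]

variable (R G V) in
theorem isSemisimpleModule_monoidAlgebra [IsSemisimpleModule R V] : IsSemisimpleModule R[G] V where
  exists_isCompl W := by
    obtain ⟨π, hπ⟩ := IsSemisimpleModule.extension_property (W.subtype.restrictScalars R)
      W.injective_subtype LinearMap.id
    exact ⟨_, LinearMap.isCompl_of_proj (f := averageConj G π)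
      (leftInverse_averageConj (i := W.subtype) (LinearMap.congr_fun hπ))⟩

variable (R G) in
theorem isSemisimpleRing_monoidAlgebra [IsSemisimpleRing R] : IsSemisimpleRing R[G] :=
  isSemisimpleModule_monoidAlgebra R G R[G]

end Maschke

section AveragingIdempotent

variable {R : Type*} [Ring R] {G : Type*} [Group G] [Fintype G] [Invertible (Fintype.card G : R)]

lemma coeff_eGrp (g : G) : (eGrp R G).coeff g = ⅟(Fintype.card G : R) := by
  classical
  simp [eGrp, Finsupp.single_apply, Finsupp.finsetSum_apply]

lemma mul_eGrp (x : R[G]) : x * eGrp R G = aug R G x • eGrp R G := by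
  induction x using MonoidAlgebra.induction_linear with
  | zero => rw [zero_mul, map_zero, zero_smul]
  | add x y hx hy => rw [add_mul, hx, hy, map_add, add_smul]
  | single g r => ext h; simp [coeff_single_mul_apply, coeff_eGrp, aug_single]

lemma eGrp_mul (x : R[G]) : eGrp R G * x = aug R G x • eGrp R G := by
  induction x using MonoidAlgebra.induction_linear with
  | zero => rw [mul_zero, map_zero, zero_smul]
  | add x y hx hy => rw [mul_add, hx, hy, map_add, add_smul]
  | single g r =>
    ext h
    simp [coeff_mul_single_apply, coeff_eGrp, aug_single, (commute_invOf_natCast _ r).eq]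

lemma eGrp_commute (x : R[G]) : Commute (eGrp R G) x :=
  (eGrp_mul x).trans (mul_eGrp x).symm

lemma aug_eGrp : aug R G (eGrp R G) = 1 := by
  simp [eGrp, aug_single]

lemma isIdempotentElem_eGrp : IsIdempotentElem (eGrp R G) := by
  rw [IsIdempotentElem, mul_eGrp, aug_eGrp, one_smul]

lemma aug_mul_one_sub_eGrp (x : R[G]) : aug R G (x * (1 - eGrp R G)) = 0 := by
  rw [map_mul, map_sub, map_one, aug_eGrp, sub_self, mul_zero]

lemma mul_one_sub_eGrp_of_aug_eq_zero {x : R[G]} (hx : aug R G x = 0) :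
    x * (1 - eGrp R G) = x := by
  rw [mul_sub, mul_one, mul_eGrp, hx, zero_smul, sub_zero]

end AveragingIdempotent

section AveragingIdempotentPi

variable {ι : Type*} {G : ι → Type*} [∀ i, Group (G i)] [∀ i, Fintype (G i)]
  {R : Type*} [Ring R] [∀ i, Invertible (Fintype.card (G i) : R)]

variable (G R) in
/-- The family `(e_{G_i})_i` of averaging idempotents, an element of `∏ R[G_i]`. -/
noncomputable def eGrpPi : ∀ i, R[G i] := fun i => eGrp R (G i)

lemma eGrpPi_commute (p : ∀ i, R[G i]) : Commute (eGrpPi G R) p :=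
  funext fun i => eGrp_commute (p i)

lemma isIdempotentElem_eGrpPi : IsIdempotentElem (eGrpPi G R) :=
  funext fun _ => isIdempotentElem_eGrp

lemma mul_one_sub_eGrpPi_of_aug_eq_zero {p : ∀ i, R[G i]} (hp : ∀ i, aug R (G i) (p i) = 0) :
    p * (1 - eGrpPi G R) = p :=
  funext fun i => mul_one_sub_eGrp_of_aug_eq_zero (hp i)

lemma mul_one_sub_eGrpPi_mul (p q : ∀ i, R[G i]) :
    p * (1 - eGrpPi G R) * (q * (1 - eGrpPi G R)) = p * q * (1 - eGrpPi G R) := by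
  have hcomm : (1 - eGrpPi G R) * q = q * (1 - eGrpPi G R) :=
    ((Commute.one_left q).sub_left (eGrpPi_commute q)).eq
  rw [mul_assoc, ← mul_assoc _ q, hcomm, mul_assoc, isIdempotentElem_eGrpPi.one_sub.eq, mul_assoc]

end AveragingIdempotentPi

section Circulant

variable {R : Type*} [Semiring R]

/-- The `G`-circulant matrix `(x, y) ↦ p (x⁻¹ * y)` of `p ∈ R[G]`, as a ring homomorphism. -/
noncomputable def groupCirculant (R : Type*) [Semiring R] (G : Type*) [Group G] [Fintype G]
    [DecidableEq G] : R[G] →+* Matrix G G R where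
  toFun p := Matrix.of fun x y => p.coeff (x⁻¹ * y)
  map_zero' := by ext; simp
  map_one' := by ext; simp [one_def, Finsupp.single_apply, Matrix.one_apply, eq_inv_mul_iff_mul_eq]
  map_add' p q := by ext; simp
  map_mul' p q := by
    ext x y
    rw [Matrix.of_apply, coeff_mul_apply_left, Finsupp.sum_fintype _ _ fun _ => zero_mul _,
      Matrix.mul_apply]
    refine Fintype.sum_equiv (Equiv.mulLeft x) _ _ fun z => ?_
    simp [mul_assoc]

lemma groupCirculant_injective (G : Type*) [Group G] [Fintype G] [DecidableEq G] :
    Function.Injective (groupCirculant R G) := fun p q hpq => by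
  ext g
  simpa [groupCirculant] using congr_fun₂ hpq 1 g

/-- The block diagonal matrix of the circulants of a family of group algebra elements. -/
noncomputable def blockCirculant {ι : Type*} [Fintype ι] [DecidableEq ι] (G : ι → Type*)
    [∀ i, Group (G i)] [∀ i, Fintype (G i)] [∀ i, DecidableEq (G i)] (R : Type*) [Semiring R] :
    (∀ i, R[G i]) →+* Matrix (Σ i, G i) (Σ i, G i) R :=
  (Matrix.blockDiagonal'RingHom G R).comp (RingHom.pi fun i =>
    (groupCirculant R (G i)).comp (Pi.evalRingHom _ i))

variable {ι : Type*} [Fintype ι] [DecidableEq ι] {G : ι → Type*} [∀ i, Group (G i)]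
  [∀ i, Fintype (G i)] [∀ i, DecidableEq (G i)]

lemma blockCirculant_apply_eq (p : ∀ i, R[G i]) (i : ι) (x y : G i) :
    blockCirculant G R p ⟨i, x⟩ ⟨i, y⟩ = (p i).coeff (x⁻¹ * y) :=
  Matrix.blockDiagonal'_apply_eq _ _ _ _

lemma blockCirculant_apply_ne (p : ∀ i, R[G i]) {i j : ι} (hij : i ≠ j) (x : G i) (y : G j) :
    blockCirculant G R p ⟨i, x⟩ ⟨j, y⟩ = 0 :=
  Matrix.blockDiagonal'_apply_ne _ _ _ hij

lemma blockCirculant_injective : Function.Injective (blockCirculant G R) := fun _ _ hpq =>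
  funext fun i => groupCirculant_injective (G i) (congr_fun (Matrix.blockDiagonal'_injective hpq) i)

end Circulant

section JoinHom

variable {ι : Type*} [Fintype ι] [DecidableEq ι] (G : ι → Type*) (R : Type*) [Ring R]

/-- The matrix `U` whose `i`-th column is the indicator of the `i`-th block. -/
def blockIndicator : Matrix (Σ i, G i) ι R :=
  (1 : Matrix ι ι R).submatrix Sigma.fst id

variable [∀ i, Fintype (G i)] [∀ i, Invertible (Fintype.card (G i) : R)]

/-- The matrix `V` whose `i`-th row averages over the `i`-th block. -/
def blockAverage : Matrix ι (Σ i, G i) R :=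
  (Matrix.diagonal fun i => ⅟(Fintype.card (G i) : R)).submatrix id Sigma.fst

variable {G R}

lemma blockIndicator_mul_mul_blockAverage_apply (C : Matrix ι ι R) (a b : Σ i, G i) :
    (blockIndicator G R * C * blockAverage G R) a b =
      C a.1 b.1 * ⅟(Fintype.card (G b.1) : R) := by
  simp [blockIndicator, blockAverage, Matrix.mul_apply, Matrix.one_apply, Matrix.diagonal_apply]

lemma blockAverage_mul_blockIndicator :
    blockAverage G R * blockIndicator G R = 1 := by
  ext i j
  obtain rfl | hij := eq_or_ne i j <;>
    simp [blockIndicator, blockAverage, Matrix.mul_apply, Matrix.one_apply, Matrix.diagonal_apply,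
      Fintype.sum_sigma, *]

lemma blockIndicator_mul_mul_blockAverage_mul (C C' : Matrix ι ι R) :
    blockIndicator G R * C * blockAverage G R * (blockIndicator G R * C' * blockAverage G R) =
      blockIndicator G R * (C * C') * blockAverage G R := by
  calc
    _ = blockIndicator G R * C * (blockAverage G R * blockIndicator G R) * C' *
        blockAverage G R := by simp only [Matrix.mul_assoc]
    _ = _ := by rw [blockAverage_mul_blockIndicator, Matrix.mul_one, ← Matrix.mul_assoc _ C C']

variable [∀ i, Group (G i)] [∀ i, DecidableEq (G i)]

lemma blockIndicator_mul_blockAverage :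
    blockIndicator G R * blockAverage G R = blockCirculant G R (eGrpPi G R) := by
  ext ⟨i, x⟩ ⟨j, y⟩
  rw [← Matrix.mul_one (blockIndicator G R), blockIndicator_mul_mul_blockAverage_apply]
  obtain rfl | hij := eq_or_ne i j
  · rw [blockCirculant_apply_eq, eGrpPi, coeff_eGrp, Matrix.one_apply_eq, one_mul]
  · rw [blockCirculant_apply_ne _ hij, Matrix.one_apply_ne hij, zero_mul]

lemma blockCirculant_mul_one_sub_mul_blockIndicator (p : ∀ i, R[G i]) :
    blockCirculant G R (p * (1 - eGrpPi G R)) * blockIndicator G R = 0 := by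
  rw [map_mul, map_sub, map_one, ← blockIndicator_mul_blockAverage, Matrix.mul_assoc,
    Matrix.sub_mul, Matrix.one_mul, Matrix.mul_assoc, blockAverage_mul_blockIndicator,
    Matrix.mul_one, sub_self, Matrix.mul_zero]

lemma blockAverage_mul_blockCirculant_mul_one_sub (p : ∀ i, R[G i]) :
    blockAverage G R * blockCirculant G R (p * (1 - eGrpPi G R)) = 0 := by
  rw [((Commute.one_right p).sub_right (eGrpPi_commute p).symm).eq, map_mul, map_sub, map_one,
    ← blockIndicator_mul_blockAverage, ← Matrix.mul_assoc, Matrix.mul_sub, Matrix.mul_one,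
    ← Matrix.mul_assoc, blockAverage_mul_blockIndicator, Matrix.one_mul, sub_self, Matrix.zero_mul]

variable (G R) in
/-- The homomorphism `(C, p) ↦ U * C * V + D (p * (1 - e))` onto the ring of joins. Killing the
components of `p` along `e` makes it unital and multiplicative on all of `M_ι(R) × ∏ R[G_i]`. -/
noncomputable def joinHom :
    Matrix ι ι R × (∀ i, R[G i]) →+* Matrix (Σ i, G i) (Σ i, G i) R where
  toFun x := blockIndicator G R * x.1 * blockAverage G R +
    blockCirculant G R (x.2 * (1 - eGrpPi G R))
  map_zero' := by simp
  map_one' := by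
    rw [Prod.fst_one, Prod.snd_one, Matrix.mul_one, one_mul, blockIndicator_mul_blockAverage,
      map_sub, map_one, add_sub_cancel]
  map_add' x y := by
    rw [Prod.fst_add, Prod.snd_add, Matrix.mul_add, Matrix.add_mul, add_mul, map_add,
      add_add_add_comm]
  map_mul' x y := by
    have hleft : blockIndicator G R * x.1 * blockAverage G R *
        blockCirculant G R (y.2 * (1 - eGrpPi G R)) = 0 := by
      rw [Matrix.mul_assoc, blockAverage_mul_blockCirculant_mul_one_sub, Matrix.mul_zero]
    have hright : blockCirculant G R (x.2 * (1 - eGrpPi G R)) *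
        (blockIndicator G R * y.1 * blockAverage G R) = 0 := by
      rw [← Matrix.mul_assoc, ← Matrix.mul_assoc, blockCirculant_mul_one_sub_mul_blockIndicator,
        Matrix.zero_mul, Matrix.zero_mul]
    rw [add_mul, mul_add, mul_add, hleft, hright, add_zero, zero_add,
      blockIndicator_mul_mul_blockAverage_mul, ← map_mul, mul_one_sub_eGrpPi_mul, Prod.fst_mul,
      Prod.snd_mul]

lemma joinHom_apply (x : Matrix ι ι R × (∀ i, R[G i])) :
    joinHom G R x = blockIndicator G R * x.1 * blockAverage G R +
      blockCirculant G R (x.2 * (1 - eGrpPi G R)) :=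
  rfl

lemma blockAverage_mul_joinHom_mul_blockIndicator (x : Matrix ι ι R × (∀ i, R[G i])) :
    blockAverage G R * joinHom G R x * blockIndicator G R = x.1 := by
  rw [joinHom_apply, Matrix.mul_add, blockAverage_mul_blockCirculant_mul_one_sub, add_zero,
    ← Matrix.mul_assoc, ← Matrix.mul_assoc, blockAverage_mul_blockIndicator, Matrix.one_mul,
    Matrix.mul_assoc, blockAverage_mul_blockIndicator, Matrix.mul_one]

lemma joinHom_eq_iff {x y : Matrix ι ι R × (∀ i, R[G i])} :
    joinHom G R x = joinHom G R y ↔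
      x.1 = y.1 ∧ x.2 * (1 - eGrpPi G R) = y.2 * (1 - eGrpPi G R) := by
  refine ⟨fun h => ?_, fun ⟨h₁, h₂⟩ => by rw [joinHom_apply, joinHom_apply, h₁, h₂]⟩
  have hfst : x.1 = y.1 := by
    rw [← blockAverage_mul_joinHom_mul_blockIndicator x, h,
      blockAverage_mul_joinHom_mul_blockIndicator]
  rw [joinHom_apply, joinHom_apply, hfst, add_right_inj] at h
  exact ⟨hfst, blockCirculant_injective h⟩

lemma blockIndicator_mul_add_blockCirculant_mem_range (C : Matrix ι ι R) (p : ∀ i, R[G i]) :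
    blockIndicator G R * C * blockAverage G R + blockCirculant G R p ∈ (joinHom G R).range := by
  have hcompress : blockIndicator G R * (blockAverage G R * blockCirculant G R p *
      blockIndicator G R) * blockAverage G R = blockCirculant G R (p * eGrpPi G R) := by
    calc
      _ = blockIndicator G R * blockAverage G R * blockCirculant G R p *
          (blockIndicator G R * blockAverage G R) := by simp only [Matrix.mul_assoc]
      _ = _ := by
        rw [blockIndicator_mul_blockAverage, ← map_mul, ← map_mul, (eGrpPi_commute p).eq,
          mul_assoc, isIdempotentElem_eGrpPi.eq]
  refine ⟨(C + blockAverage G R * blockCirculant G R p * blockIndicator G R, p), ?_⟩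
  rw [joinHom_apply, Matrix.mul_add, Matrix.add_mul, hcompress, add_assoc, ← map_add, ← mul_add,
    add_sub_cancel, mul_one]

variable (G R) in
theorem isSemisimpleRing_range_joinHom [IsSemisimpleRing R] :
    IsSemisimpleRing (joinHom G R).range :=
  have (i : ι) : IsSemisimpleRing R[G i] := isSemisimpleRing_monoidAlgebra R (G i)
  (joinHom G R).rangeRestrict.isSemisimpleRing_of_surjective (joinHom G R).rangeRestrict_surjective

end JoinHom

section Join

variable {d : ℕ} {G : Fin d → Type*} [∀ i, Group (G i)] [∀ i, Fintype (G i)]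
  [∀ i, DecidableEq (G i)] {R : Type*} [Ring R] [∀ i, Invertible (Fintype.card (G i) : R)]

lemma isJoin_blockIndicator_mul_add_blockCirculant (C : Matrix (Fin d) (Fin d) R)
    (p : ∀ i, R[G i]) :
    IsJoin (blockIndicator G R * C * blockAverage G R + blockCirculant G R p) := by
  refine ⟨fun i g x y => ?_, fun i j hij x x' y y' => ?_⟩
  · simp only [Matrix.add_apply, blockIndicator_mul_mul_blockAverage_apply,
      blockCirculant_apply_eq, mul_inv_rev, mul_assoc, inv_mul_cancel_left]
  · simp only [Matrix.add_apply, blockIndicator_mul_mul_blockAverage_apply,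
      blockCirculant_apply_ne p hij]

lemma IsJoin.exists_eq {A : Matrix (Σ i, G i) (Σ i, G i) R} (hA : IsJoin A) :
    ∃ (C : Matrix (Fin d) (Fin d) R) (p : ∀ i, R[G i]),
      blockIndicator G R * C * blockAverage G R + blockCirculant G R p = A := by
  refine ⟨Matrix.of fun i j => if i = j then 0 else A ⟨i, 1⟩ ⟨j, 1⟩ * Fintype.card (G j),
    fun i => ofCoeff (Finsupp.equivFunOnFinite.symm fun g => A ⟨i, 1⟩ ⟨i, g⟩), ?_⟩
  ext ⟨i, x⟩ ⟨j, y⟩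
  rw [Matrix.add_apply, blockIndicator_mul_mul_blockAverage_apply]
  obtain rfl | hij := eq_or_ne i j
  · simpa [blockCirculant_apply_eq] using (hA.1 i x 1 (x⁻¹ * y)).symm
  · simpa [blockCirculant_apply_ne _ hij, hij] using hA.2 i j hij 1 x 1 y

lemma mem_range_joinHom {A : Matrix (Σ i, G i) (Σ i, G i) R} :
    A ∈ (joinHom G R).range ↔ IsJoin A := by
  constructor
  · rintro ⟨x, rfl⟩
    exact isJoin_blockIndicator_mul_add_blockCirculant _ _
  · intro hA
    obtain ⟨C, p, rfl⟩ := hA.exists_eq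
    exact blockIndicator_mul_add_blockCirculant_mem_range C p

lemma bijective_rangeRestrict_joinHom_targetΔ :
    Function.Bijective fun x : targetΔ G R => (joinHom G R).rangeRestrict x := by
  constructor
  · intro x y hxy
    obtain ⟨hfst, hsnd⟩ := joinHom_eq_iff.mp (congrArg Subtype.val hxy)
    rw [mul_one_sub_eGrpPi_of_aug_eq_zero x.2, mul_one_sub_eGrpPi_of_aug_eq_zero y.2] at hsnd
    exact Subtype.ext (Prod.ext hfst hsnd)
  · rintro ⟨_, x, rfl⟩
    refine ⟨⟨(x.1, x.2 * (1 - eGrpPi G R)), fun i => aug_mul_one_sub_eGrp (x.2 i)⟩,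
      Subtype.ext (joinHom_eq_iff.mpr ⟨rfl, ?_⟩)⟩
    rw [mul_assoc, isIdempotentElem_eGrpPi.one_sub.eq]

variable (G R) in
/-- The isomorphism from `M_d(R) × ∏ Δ_R(G_i)` to the join ring, the latter given as the range of
`joinHom` (see `mem_range_joinHom`). -/
noncomputable def targetΔEquivRange : targetΔ G R ≃+* (joinHom G R).range :=
  RingEquiv.ofBijective
    (((joinHom G R).rangeRestrict : _ →ₙ+* (joinHom G R).range).comp
      (NonUnitalSubringClass.subtype (targetΔ G R)))
    bijective_rangeRestrict_joinHom_targetΔ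

lemma targetΔEquivRange_one_sub_eGrp :
    targetΔEquivRange G R ⟨(1, fun i => 1 - eGrp R (G i)), one_sub_eGrp_mem G R⟩ = 1 := by
  rw [← map_one (joinHom G R).rangeRestrict]
  exact Subtype.ext (joinHom_eq_iff.mpr
    ⟨rfl, isIdempotentElem_eGrpPi.one_sub.eq.trans (one_mul _).symm⟩)

end Join

/-- If each `|G_i|` is invertible in `R`, the join ring `J_{G_1,...,G_d}(R)`
is isomorphic, as a ring, to `M_d(R) × Π_i Δ_R(G_i)` (where the augmentation
ideal `Δ_R(G_i)` is a ring with identity `1 - e_{G_i}`). Consequently, if `R`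
is semisimple then so is the join ring. -/
theorem join_decomposition {d : ℕ} (G : Fin d → Type*) [∀ i, Group (G i)]
    [∀ i, Fintype (G i)] [∀ i, DecidableEq (G i)] (R : Type*) [Ring R]
    [∀ i, Invertible (Fintype.card (G i) : R)]
    (S : Subring (Matrix ((i : Fin d) × G i) ((i : Fin d) × G i) R))
    (hS : (S : Set (Matrix ((i : Fin d) × G i) ((i : Fin d) × G i) R)) =
      {A | IsJoin A}) :
    (∃ φ : S ≃ targetΔ G R,
      (∀ a b : S, φ (a * b) = φ a * φ b) ∧
      (∀ a b : S, φ (a + b) = φ a + φ b) ∧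
      φ 1 = ⟨(1, fun i => 1 - eGrp R (G i)), one_sub_eGrp_mem G R⟩) ∧
    (IsSemisimpleRing R → IsSemisimpleRing S) := by
  obtain rfl : S = (joinHom G R).range :=
    SetLike.ext fun A => (Set.ext_iff.mp hS A).trans mem_range_joinHom.symm
  let φ := (targetΔEquivRange G R).symm
  have hφ_one : φ 1 = ⟨(1, fun i => 1 - eGrp R (G i)), one_sub_eGrp_mem G R⟩ :=
    (targetΔEquivRange G R).symm_apply_eq.mpr targetΔEquivRange_one_sub_eGrp.symm
  exact ⟨⟨φ.toEquiv, map_mul φ, map_add φ, hφ_one⟩, fun _ => isSemisimpleRing_range_joinHom G R⟩
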